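/- For i ∈ {1,…,n} and m ∈ {1,…,M}, define v_{im} = Σ_{k∈K} Σ_{m'=1}^∞ (b̃_{k,mm'} − b_{k,mm'})·⟨g_{ik}, φ̂_{m'}⟩ + Σ_{k∈K} Σ_{m'=M+1}^∞ b_{k,mm'}·(⟨g_{ik}, φ̂_{m'}⟩ − ⟨g_{ik}, φ_{m'}⟩) + ⟨e_i, φ̂_m − φ_m⟩ (all series converge absolutely). Then (1/n) Σ_{i=1}^n Σ_{m=1}^M v_{im}² ≤ 12·(Σ_{m=1}^∞ Γ_φ(m)²)·(Σ_{k∈K} ‖β_k‖_HS²)·(Σ_{k∈K} Γ_g(k)) + 3·Φ(M)²·(Σ_{k∈K} Γ_g(k))·(Σ_{m'=M+1}^∞ Γ_φ(m')²) + 3·Γ_e·Σ_{m=1}^M Γ_φ(m)², where Φ(M)² = Σ_{k∈K} Σ_{m=1}^M Σ_{m'=M+1}^∞ b_{k,mm'}². -/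

import Mathlib

open MeasureTheory
open scoped RealInnerProductSpace

/-- `L²(T)` for a set `T ⊆ ℝ`, with the Lebesgue measure restricted to `T`. -/
noncomputable def muT (T : Set ℝ) : Measure ℝ := volume.restrict T

/-- The product measure on `T × T`, so that `Lp ℝ 2 (piT T)` is `L²(T×T)`. -/
noncomputable def piT (T : Set ℝ) : Measure (ℝ × ℝ) := (volume.restrict T).prod (volume.restrict T)

/-! ### Tensor products in `L²(T × T)` -/

lemma memLp_tensor (T : Set ℝ) (f h : Lp ℝ 2 (muT T)) :
    MemLp (fun x : ℝ × ℝ => f x.1 * h x.2) 2 (piT T) := by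
  haveI : SigmaFinite (muT T) := by unfold muT; infer_instance
  have hf := (memLp_two_iff_integrable_sq (Lp.aestronglyMeasurable f)).1 (Lp.memLp f)
  have hh := (memLp_two_iff_integrable_sq (Lp.aestronglyMeasurable h)).1 (Lp.memLp h)
  have hm : AEStronglyMeasurable (fun x : ℝ × ℝ => f x.1 * h x.2) (piT T) :=
    AEStronglyMeasurable.mul
      ((Lp.aestronglyMeasurable f).comp_fst (ν := muT T))
      ((Lp.aestronglyMeasurable h).comp_snd (μ := muT T))
  rw [memLp_two_iff_integrable_sq hm]
  have := hf.mul_prod hh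
  simp only [← mul_pow] at this
  exact this

noncomputable def tens (T : Set ℝ) (f h : Lp ℝ 2 (muT T)) : Lp ℝ 2 (piT T) :=
  (memLp_tensor T f h).toLp

lemma inner_tens (T : Set ℝ) (β : Lp ℝ 2 (piT T)) (f h : Lp ℝ 2 (muT T)) :
    ∫ x, β x * f x.1 * h x.2 ∂(piT T) = ⟪β, tens T f h⟫ := by
  rw [L2.inner_def]
  apply integral_congr_ae
  filter_upwards [(memLp_tensor T f h).coeFn_toLp] with x hx
  simp only [tens]
  rw [hx]
  simp
  ring

lemma inner_tens_tens (T : Set ℝ) (f h f' h' : Lp ℝ 2 (muT T)) :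
    ⟪tens T f h, tens T f' h'⟫ = ⟪f, f'⟫ * ⟪h, h'⟫ := by
  haveI : SigmaFinite (muT T) := by unfold muT; infer_instance
  rw [L2.inner_def, L2.inner_def, L2.inner_def, ← integral_prod_mul]
  apply integral_congr_ae
  filter_upwards [(memLp_tensor T f h).coeFn_toLp, (memLp_tensor T f' h').coeFn_toLp] with x hx hx'
  simp only [tens]
  rw [hx, hx']
  simp
  ring

/-! ### Abstract Hilbert space part -/

section abstract_part
variable {H E : Type*} [NormedAddCommGroup H] [InnerProductSpace ℝ H]
  [NormedAddCommGroup E] [InnerProductSpace ℝ E]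

lemma bessel_scaled {ι : Type*} (w : ι → E) (x : E) (c : ℝ) (hc : ∀ i, ⟪w i, w i⟫ = c ^ 2)
    (ho : ∀ i j, i ≠ j → ⟪w i, w j⟫ = 0) (s : Finset ι) :
    ∑ i ∈ s, ⟪x, w i⟫ ^ 2 ≤ ‖x‖ ^ 2 * c ^ 2 := by
  classical
  set A := ∑ i ∈ s, ⟪x, w i⟫ ^ 2 with hA
  set y := ∑ i ∈ s, ⟪x, w i⟫ • w i with hy
  have h1 : ⟪x, y⟫ = A := by
    rw [hy, inner_sum]
    exact Finset.sum_congr rfl fun i _ => by rw [inner_smul_right]; ring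
  have h2 : ‖y‖ ^ 2 = c ^ 2 * A := by
    rw [← real_inner_self_eq_norm_sq, hy, sum_inner, hA, Finset.mul_sum]
    refine Finset.sum_congr rfl fun i hi => ?_
    rw [inner_sum, Finset.sum_eq_single_of_mem i hi]
    · rw [inner_smul_left, inner_smul_right, hc]; simp; ring
    · intro j _ hj
      rw [inner_smul_left, inner_smul_right, ho i j hj.symm]; simp
  have hA0 : 0 ≤ A := Finset.sum_nonneg fun i _ => sq_nonneg _
  have h3 : A ^ 2 ≤ ‖x‖ ^ 2 * (c ^ 2 * A) := by
    rw [← h2, ← h1, ← mul_pow]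
    exact sq_le_sq' (neg_le_of_abs_le (abs_real_inner_le_norm x y))
      (real_inner_le_norm x y)
  rcases hA0.eq_or_lt with h | h
  · rw [← h]; positivity
  · nlinarith

lemma tens_sub_left (t : H → H → E) (ht : ∀ f h f' h', ⟪t f h, t f' h'⟫ = ⟪f, f'⟫ * ⟪h, h'⟫)
    (f f' h : H) : t (f - f') h = t f h - t f' h := by
  rw [← sub_eq_zero, ← inner_self_eq_zero (𝕜 := ℝ)]
  simp only [inner_sub_left, inner_sub_right, ht]
  ring

lemma tens_sub_right (t : H → H → E) (ht : ∀ f h f' h', ⟪t f h, t f' h'⟫ = ⟪f, f'⟫ * ⟪h, h'⟫)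
    (f h h' : H) : t f (h - h') = t f h - t f h' := by
  rw [← sub_eq_zero, ← inner_self_eq_zero (𝕜 := ℝ)]
  simp only [inner_sub_left, inner_sub_right, ht]
  ring

lemma bessel_right (t : H → H → E) (ht : ∀ f h f' h', ⟪t f h, t f' h'⟫ = ⟪f, f'⟫ * ⟪h, h'⟫)
    {ψ : ℕ → H} (hψ : Orthonormal ℝ ψ) (β : E) (d : H) (s : Finset ℕ) :
    ∑ m ∈ s, ⟪β, t d (ψ m)⟫ ^ 2 ≤ ‖β‖ ^ 2 * ‖d‖ ^ 2 := by
  apply bessel_scaled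
  · intro i; rw [ht, real_inner_self_eq_norm_sq, real_inner_self_eq_norm_sq, hψ.1 i]; ring
  · intro i j hij; rw [ht, hψ.2 hij, mul_zero]

lemma bessel_left (t : H → H → E) (ht : ∀ f h f' h', ⟪t f h, t f' h'⟫ = ⟪f, f'⟫ * ⟪h, h'⟫)
    {ψ : ℕ → H} (hψ : Orthonormal ℝ ψ) (β : E) (d : H) (s : Finset ℕ) :
    ∑ m ∈ s, ⟪β, t (ψ m) d⟫ ^ 2 ≤ ‖β‖ ^ 2 * ‖d‖ ^ 2 := by
  apply bessel_scaled
  · intro i; rw [ht, real_inner_self_eq_norm_sq, real_inner_self_eq_norm_sq, hψ.1 i]; ring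
  · intro i j hij; rw [ht, hψ.2 hij, zero_mul]

/-- Square-summability and the bound `4 ‖β‖² Σ Γ²` for the differences of coefficients. -/
lemma diff_bound (t : H → H → E) (ht : ∀ f h f' h', ⟪t f h, t f' h'⟫ = ⟪f, f'⟫ * ⟪h, h'⟫)
    {φ ψ : ℕ → H} (hφ : Orthonormal ℝ φ) (hψ : Orthonormal ℝ ψ) (β : E)
    (Γ : ℕ → ℝ) (hΓ : ∀ m, ‖ψ m - φ m‖ ≤ Γ m) (hs : Summable fun m => Γ m ^ 2) :
    (∀ m, Summable fun m' => (⟪β, t (ψ m) (ψ m')⟫ - ⟪β, t (φ m) (φ m')⟫) ^ 2) ∧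
    ∀ M : ℕ, ∑ m ∈ Finset.range M,
      ∑' m', (⟪β, t (ψ m) (ψ m')⟫ - ⟪β, t (φ m) (φ m')⟫) ^ 2 ≤
      4 * (∑' m, Γ m ^ 2) * ‖β‖ ^ 2 := by
  have hΓ2 : ∀ m, ‖ψ m - φ m‖ ^ 2 ≤ Γ m ^ 2 := fun m =>
    pow_le_pow_left₀ (norm_nonneg _) (hΓ m) 2
  set A : ℕ → ℕ → ℝ := fun m m' => ⟪β, t (ψ m - φ m) (ψ m')⟫ ^ 2 with hA
  set B : ℕ → ℕ → ℝ := fun m m' => ⟪β, t (φ m) (ψ m' - φ m')⟫ ^ 2 with hB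
  have hle : ∀ m m', (⟪β, t (ψ m) (ψ m')⟫ - ⟪β, t (φ m) (φ m')⟫) ^ 2 ≤ 2 * (A m m' + B m m') := by
    intro m m'
    simp only [hA, hB, tens_sub_left t ht, tens_sub_right t ht, inner_sub_right]
    nlinarith [sq_nonneg ((⟪β, t (ψ m) (ψ m')⟫ - ⟪β, t (φ m) (ψ m')⟫) -
      (⟪β, t (φ m) (ψ m')⟫ - ⟪β, t (φ m) (φ m')⟫))]
  have hAs : ∀ m, Summable (A m) := fun m =>
    summable_of_sum_le (fun _ => sq_nonneg _) (fun s => bessel_right t ht hψ β (ψ m - φ m) s)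
  have hAt : ∀ m, ∑' m', A m m' ≤ ‖β‖ ^ 2 * Γ m ^ 2 := fun m =>
    ((hAs m).tsum_le_of_sum_le fun s => bessel_right t ht hψ β (ψ m - φ m) s).trans
      (mul_le_mul_of_nonneg_left (hΓ2 m) (sq_nonneg _))
  have hBM : ∀ s m', ∑ m ∈ s, B m m' ≤ ‖β‖ ^ 2 * Γ m' ^ 2 := fun s m' =>
    (bessel_left t ht hφ β (ψ m' - φ m') s).trans
      (mul_le_mul_of_nonneg_left (hΓ2 m') (sq_nonneg _))
  have hBs : ∀ m, Summable (B m) := fun m =>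
    Summable.of_nonneg_of_le (fun _ => sq_nonneg _)
      (fun m' => by simpa using hBM {m} m') (hs.mul_left (‖β‖ ^ 2))
  have hABs : ∀ m, Summable fun m' => 2 * (A m m' + B m m') := fun m =>
    ((hAs m).add (hBs m)).mul_left 2
  have hS : ∀ m, Summable fun m' => (⟪β, t (ψ m) (ψ m')⟫ - ⟪β, t (φ m) (φ m')⟫) ^ 2 := fun m =>
    Summable.of_nonneg_of_le (fun _ => sq_nonneg _) (hle m) (hABs m)
  refine ⟨hS, fun M => ?_⟩
  have h1 : ∑ m ∈ Finset.range M, ∑' m', A m m' ≤ ‖β‖ ^ 2 * ∑' m, Γ m ^ 2 :=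
    calc _ ≤ ∑ m ∈ Finset.range M, ‖β‖ ^ 2 * Γ m ^ 2 := Finset.sum_le_sum fun m _ => hAt m
      _ = ‖β‖ ^ 2 * ∑ m ∈ Finset.range M, Γ m ^ 2 := by rw [Finset.mul_sum]
      _ ≤ _ := mul_le_mul_of_nonneg_left (hs.sum_le_tsum _ fun _ _ => sq_nonneg _) (sq_nonneg _)
  have h2 : ∑ m ∈ Finset.range M, ∑' m', B m m' ≤ ‖β‖ ^ 2 * ∑' m, Γ m ^ 2 := by
    rw [← Summable.tsum_finsetSum fun m _ => hBs m, ← tsum_mul_left]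
    exact Summable.tsum_le_tsum (fun m' => hBM _ m') (summable_sum fun m _ => hBs m)
      (hs.mul_left _)
  calc _ ≤ ∑ m ∈ Finset.range M, 2 * (∑' m', A m m' + ∑' m', B m m') := by
        refine Finset.sum_le_sum fun m _ => ?_
        rw [← (hAs m).tsum_add (hBs m), ← tsum_mul_left]
        exact (hS m).tsum_le_tsum (hle m) (hABs m)
    _ = 2 * (∑ m ∈ Finset.range M, ∑' m', A m m' + ∑ m ∈ Finset.range M, ∑' m', B m m') := by
        rw [← Finset.mul_sum, Finset.sum_add_distrib]
    _ ≤ _ := by nlinarith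

end abstract_part

lemma summable_abs_mul_of_sq {x y : ℕ → ℝ} (hx : Summable fun i => x i ^ 2)
    (hy : Summable fun i => y i ^ 2) : Summable fun i => |x i * y i| := by
  refine Summable.of_nonneg_of_le (fun _ => abs_nonneg _) (fun i => ?_) (hx.add hy)
  rw [abs_mul]
  nlinarith [sq_nonneg (|x i| - |y i|), sq_abs (x i), sq_abs (y i), sq_nonneg (x i),
    sq_nonneg (y i)]

lemma tsum_mul_sq_le {x y : ℕ → ℝ} (hx : Summable fun i => x i ^ 2)
    (hy : Summable fun i => y i ^ 2) :
    (∑' i, x i * y i) ^ 2 ≤ (∑' i, x i ^ 2) * ∑' i, y i ^ 2 := by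
  have h := (summable_abs_mul_of_sq hx hy).of_abs
  exact le_of_tendsto_of_tendsto' (h.hasSum.pow 2) (Filter.Tendsto.mul hx.hasSum hy.hasSum)
    fun s => Finset.sum_mul_sq_le_sq_mul_sq s x y

lemma sum_tsum_mul_sq_le {K : Type*} [Fintype K] {x y : K → ℕ → ℝ}
    (hx : ∀ k, Summable fun i => x k i ^ 2) (hy : ∀ k, Summable fun i => y k i ^ 2) :
    (∑ k, ∑' i, x k i * y k i) ^ 2 ≤ (∑ k, ∑' i, x k i ^ 2) * ∑ k, ∑' i, y k i ^ 2 :=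
  Finset.sum_sq_le_sum_mul_sum_of_sq_le_mul _ (fun _ _ => tsum_nonneg fun _ => sq_nonneg _)
    (fun _ _ => tsum_nonneg fun _ => sq_nonneg _) fun k _ => tsum_mul_sq_le (hx k) (hy k)

/-- Bound on the average squared perturbation scores
`v_{im} = Σ_{k∈K} Σ_{m'} (b̃_{k,mm'} − b_{k,mm'}) ⟨g_{ik}, φ̂_{m'}⟩
  + Σ_{k∈K} Σ_{m'>M} b_{k,mm'} (⟨g_{ik}, φ̂_{m'}⟩ − ⟨g_{ik}, φ_{m'}⟩)
  + ⟨e_i, φ̂_m − φ_m⟩` (all series converge absolutely):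
`(1/n) Σ_i Σ_{m≤M} v_{im}² ≤ 12 (Σ_m Γ_φ(m)²)(Σ_k ‖β_k‖_HS²)(Σ_k Γ_g(k))
  + 3 Φ(M)² (Σ_k Γ_g(k)) (Σ_{m'>M} Γ_φ(m')²) + 3 Γ_e Σ_{m≤M} Γ_φ(m)²`,
where `Φ(M)² = Σ_k Σ_{m≤M} Σ_{m'>M} b_{k,mm'}²`. -/
theorem perturbation_score_bound
    (T : Set ℝ) (hT : IsCompact T) (hTpos : 0 < volume T)
    {K : Type*} [Fintype K]
    (β : K → Lp ℝ 2 (piT T))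
    (φ φhat : HilbertBasis ℕ ℝ (Lp ℝ 2 (muT T)))
    (Γφ : ℕ → ℝ) (hΓφ : ∀ m, ‖φhat m - φ m‖ ≤ Γφ m)
    (hΓsum : Summable fun m => Γφ m ^ 2)
    (b btilde : K → ℕ → ℕ → ℝ)
    (hb : ∀ k m m', b k m m' = ∫ x, β k x * φ m x.1 * φ m' x.2 ∂(piT T))
    (hbt : ∀ k m m', btilde k m m' = ∫ x, β k x * φhat m x.1 * φhat m' x.2 ∂(piT T))
    (n M : ℕ) (hn : 0 < n) (hM : 0 < M)
    (g : Fin n → K → Lp ℝ 2 (muT T)) (e : Fin n → Lp ℝ 2 (muT T))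
    (Γg : K → ℝ) (Γe : ℝ)
    (hg : ∀ k, (1 / n : ℝ) * ∑ i, ‖g i k‖ ^ 2 ≤ Γg k)
    (he : (1 / n : ℝ) * ∑ i, ‖e i‖ ^ 2 ≤ Γe)
    (v : Fin n → ℕ → ℝ)
    (hv : ∀ (i : Fin n) (m : ℕ),
      v i m =
        (∑ k, ∑' m', (btilde k m m' - b k m m') * ⟪g i k, φhat m'⟫) +
          (∑ k, ∑' m' : ℕ,
            b k m (m' + M) * (⟪g i k, φhat (m' + M)⟫ - ⟪g i k, φ (m' + M)⟫)) +
          ⟪e i, φhat m - φ m⟫) :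
    (∀ (i : Fin n) (m : ℕ) (k : K),
        Summable fun m' => |(btilde k m m' - b k m m') * ⟪g i k, φhat m'⟫|) ∧
    (∀ (i : Fin n) (m : ℕ) (k : K),
        Summable fun m' : ℕ =>
          |b k m (m' + M) * (⟪g i k, φhat (m' + M)⟫ - ⟪g i k, φ (m' + M)⟫)|) ∧
    (1 / n : ℝ) * ∑ i, ∑ m ∈ Finset.range M, v i m ^ 2 ≤
      12 * (∑' m, Γφ m ^ 2) * (∑ k, ‖β k‖ ^ 2) * (∑ k, Γg k) +
        3 * (∑ k, ∑ m ∈ Finset.range M, ∑' m' : ℕ, b k m (m' + M) ^ 2) *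
          (∑ k, Γg k) * (∑' m' : ℕ, Γφ (m' + M) ^ 2) +
        3 * Γe * ∑ m ∈ Finset.range M, Γφ m ^ 2 := by
  have ht := inner_tens_tens T
  simp only [inner_tens] at hb hbt
  have hD := fun k => diff_bound (tens T) ht φ.orthonormal φhat.orthonormal (β k) Γφ hΓφ hΓsum
  simp only [← hb, ← hbt] at hD
  have hG1 : ∀ (i : Fin n) (k : K) (s : Finset ℕ), ∑ m ∈ s, ⟪g i k, φhat m⟫ ^ 2 ≤ ‖g i k‖ ^ 2 := by
    intro i k s
    have := bessel_scaled (fun m => φhat m) (g i k) 1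
      (fun m => by rw [real_inner_self_eq_norm_sq, φhat.orthonormal.1 m])
      (fun a c hac => φhat.orthonormal.2 hac) s
    simpa using this
  have hG1s : ∀ (i : Fin n) (k : K), Summable fun m => ⟪g i k, φhat m⟫ ^ 2 := fun i k =>
    summable_of_sum_le (fun _ => sq_nonneg _) (hG1 i k)
  have hG1t : ∀ (i : Fin n) (k : K), ∑' m, ⟪g i k, φhat m⟫ ^ 2 ≤ ‖g i k‖ ^ 2 := fun i k =>
    (hG1s i k).tsum_le_of_sum_le (hG1 i k)
  have hsq : ∀ (f : Lp ℝ 2 (muT T)) (m : ℕ), ⟪f, φhat m - φ m⟫ ^ 2 ≤ ‖f‖ ^ 2 * Γφ m ^ 2 := by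
    intro f m
    rw [← mul_pow, ← sq_abs]
    exact pow_le_pow_left₀ (abs_nonneg _) ((abs_real_inner_le_norm _ _).trans
      (mul_le_mul_of_nonneg_left (hΓφ m) (norm_nonneg _))) 2
  have hsM : Summable fun m => Γφ (m + M) ^ 2 := (summable_nat_add_iff M).2 hΓsum
  have hG2 : ∀ (i : Fin n) (k : K) (m : ℕ),
      (⟪g i k, φhat (m + M)⟫ - ⟪g i k, φ (m + M)⟫) ^ 2 ≤ ‖g i k‖ ^ 2 * Γφ (m + M) ^ 2 := by
    intro i k m
    rw [← inner_sub_right]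
    exact hsq _ _
  have hG2s : ∀ (i : Fin n) (k : K),
      Summable fun m => (⟪g i k, φhat (m + M)⟫ - ⟪g i k, φ (m + M)⟫) ^ 2 := fun i k =>
    Summable.of_nonneg_of_le (fun _ => sq_nonneg _) (hG2 i k) (hsM.mul_left _)
  have hG2t : ∀ (i : Fin n) (k : K),
      ∑' m, (⟪g i k, φhat (m + M)⟫ - ⟪g i k, φ (m + M)⟫) ^ 2 ≤
        ‖g i k‖ ^ 2 * ∑' m, Γφ (m + M) ^ 2 := fun i k => by
    rw [← tsum_mul_left]
    exact (hG2s i k).tsum_le_tsum (hG2 i k) (hsM.mul_left _)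
  have hbs : ∀ k m, Summable fun m' => b k m m' ^ 2 := fun k m => by
    simp only [hb]
    exact summable_of_sum_le (fun _ => sq_nonneg _)
      (fun s => bessel_right (tens T) ht φ.orthonormal (β k) (φ m) s)
  have hbM : ∀ k m, Summable fun m' => b k m (m' + M) ^ 2 := fun k m =>
    (summable_nat_add_iff (f := fun m' => b k m m' ^ 2) M).2 (hbs k m)
  refine ⟨fun i m k => summable_abs_mul_of_sq ((hD k).1 m) (hG1s i k),
    fun i m k => summable_abs_mul_of_sq (hbM k m) (hG2s i k), ?_⟩
  set D : ℕ → ℝ := fun m => ∑ k, ∑' m', (btilde k m m' - b k m m') ^ 2 with hDdef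
  set P : ℕ → ℝ := fun m => ∑ k, ∑' m' : ℕ, b k m (m' + M) ^ 2 with hPdef
  set S := ∑' m, Γφ m ^ 2 with hS
  set R := ∑' m : ℕ, Γφ (m + M) ^ 2 with hR
  set N : Fin n → ℝ := fun i => ∑ k, ‖g i k‖ ^ 2 with hN
  have hD0 : ∀ m, 0 ≤ D m := fun m =>
    Finset.sum_nonneg fun _ _ => tsum_nonneg fun _ => sq_nonneg _
  have hP0 : ∀ m, 0 ≤ P m := fun m =>
    Finset.sum_nonneg fun _ _ => tsum_nonneg fun _ => sq_nonneg _
  have hN0 : ∀ i, 0 ≤ N i := fun i => Finset.sum_nonneg fun _ _ => sq_nonneg _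
  have hS0 : 0 ≤ S := tsum_nonneg fun _ => sq_nonneg _
  have hR0 : 0 ≤ R := tsum_nonneg fun _ => sq_nonneg _
  have hv2 : ∀ i m, v i m ^ 2 ≤
      3 * (D m * N i) + 3 * (P m * (N i * R)) + 3 * (‖e i‖ ^ 2 * Γφ m ^ 2) := by
    intro i m
    have h1 : (∑ k, ∑' m', (btilde k m m' - b k m m') * ⟪g i k, φhat m'⟫) ^ 2 ≤ D m * N i :=
      (sum_tsum_mul_sq_le (fun k => (hD k).1 m) (fun k => hG1s i k)).trans
        (mul_le_mul_of_nonneg_left (Finset.sum_le_sum fun k _ => hG1t i k) (hD0 m))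
    have h2 : (∑ k, ∑' m' : ℕ,
        b k m (m' + M) * (⟪g i k, φhat (m' + M)⟫ - ⟪g i k, φ (m' + M)⟫)) ^ 2 ≤
        P m * (N i * R) := by
      refine (sum_tsum_mul_sq_le (fun k => hbM k m) (fun k => hG2s i k)).trans
        (mul_le_mul_of_nonneg_left ?_ (hP0 m))
      rw [hN, Finset.sum_mul]
      exact Finset.sum_le_sum fun k _ => hG2t i k
    have h3 := hsq (e i) m
    rw [hv]
    generalize (∑ k, ∑' m', (btilde k m m' - b k m m') * ⟪g i k, φhat m'⟫) = x at *
    generalize (∑ k, ∑' m' : ℕ,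
        b k m (m' + M) * (⟪g i k, φhat (m' + M)⟫ - ⟪g i k, φ (m' + M)⟫)) = y at *
    generalize ⟪e i, φhat m - φ m⟫ = z at *
    nlinarith [sq_nonneg (x - y), sq_nonneg (y - z), sq_nonneg (x - z)]
  have hNavg : (1 / n : ℝ) * ∑ i, N i ≤ ∑ k, Γg k := by
    rw [hN, Finset.sum_comm, Finset.mul_sum]
    exact Finset.sum_le_sum fun k _ => hg k
  have hNavg0 : 0 ≤ (1 / n : ℝ) * ∑ i, N i :=
    mul_nonneg (by positivity) (Finset.sum_nonneg fun i _ => hN0 i)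
  have hDs : ∑ m ∈ Finset.range M, D m ≤ 4 * S * ∑ k, ‖β k‖ ^ 2 := by
    rw [hDdef, Finset.sum_comm, Finset.mul_sum]
    exact Finset.sum_le_sum fun k _ => (hD k).2 M
  have hPs : ∑ k, ∑ m ∈ Finset.range M, ∑' m' : ℕ, b k m (m' + M) ^ 2 =
      ∑ m ∈ Finset.range M, P m := by
    rw [hPdef, Finset.sum_comm]
  rw [hPs]
  have hPs0 : 0 ≤ ∑ m ∈ Finset.range M, P m := Finset.sum_nonneg fun m _ => hP0 m
  have hDs0 : 0 ≤ ∑ m ∈ Finset.range M, D m := Finset.sum_nonneg fun m _ => hD0 m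
  have hGs0 : 0 ≤ ∑ m ∈ Finset.range M, Γφ m ^ 2 := Finset.sum_nonneg fun m _ => sq_nonneg _
  have hsum : (1 / n : ℝ) * ∑ i, ∑ m ∈ Finset.range M, v i m ^ 2 ≤
      3 * ((∑ m ∈ Finset.range M, D m) * ((1 / n : ℝ) * ∑ i, N i)) +
      3 * ((∑ m ∈ Finset.range M, P m) * (((1 / n : ℝ) * ∑ i, N i) * R)) +
      3 * (((1 / n : ℝ) * ∑ i, ‖e i‖ ^ 2) * ∑ m ∈ Finset.range M, Γφ m ^ 2) := by
    calc _ ≤ (1 / n : ℝ) * ∑ i, ∑ m ∈ Finset.range M,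
          (3 * (D m * N i) + 3 * (P m * (N i * R)) + 3 * (‖e i‖ ^ 2 * Γφ m ^ 2)) :=
          mul_le_mul_of_nonneg_left (Finset.sum_le_sum fun i _ => Finset.sum_le_sum fun m _ =>
            hv2 i m) (by positivity)
      _ = (1 / n : ℝ) * ∑ i, (3 * (∑ m ∈ Finset.range M, D m) * N i +
            3 * (∑ m ∈ Finset.range M, P m) * R * N i +
            3 * (∑ m ∈ Finset.range M, Γφ m ^ 2) * ‖e i‖ ^ 2) := by
          congr 1
          refine Finset.sum_congr rfl fun i _ => ?_
          simp only [Finset.sum_add_distrib, ← Finset.mul_sum, ← Finset.sum_mul]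
          ring
      _ = _ := by
          simp only [Finset.sum_add_distrib, ← Finset.mul_sum]
          ring
  have a1 := mul_le_mul hDs hNavg hNavg0 (hDs0.trans hDs)
  have a2 := mul_le_mul_of_nonneg_left (mul_le_mul_of_nonneg_right hNavg hR0) hPs0
  have a3 := mul_le_mul_of_nonneg_right he hGs0
  nlinarith [hsum, a1, a2, a3]
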